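/- Let Theta = [0, a_1, a_2, ...] in k((X^{-1})) with convergents (p_n/q_n). If a_1 a_2 ... a_n is a palindrome (i.e., a_i = a_{n+1-i} for all i), then ||q_{n-1} Theta^{-1}|| <= 2^{-deg q_{n-1}}, and consequently |q_{n-1}|^2 * ||q_{n-1} Theta|| * ||q_{n-1} Theta^{-1}|| <= 2^{-deg q_n + deg q_{n-1}} < 1. -/

import Mathlib

open Polynomial Filter

noncomputable section
open scoped Classical

namespace Littlewood

variable (k : Type*) [Field k]

/-- The element `X` of `k((X⁻¹))`: the inverse of the Laurent-series variable `t = X⁻¹`. -/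
def XLS : LaurentSeries k := (HahnSeries.single (1 : ℤ) (1 : k))⁻¹

variable {k}

/-- Embedding of `k[X]` into `k((X⁻¹))`, sending the polynomial variable to `X`. -/
def emb (p : Polynomial k) : LaurentSeries k := Polynomial.aeval (XLS k) p

/-- The degree of a Laurent series in `X⁻¹`: if `F = ∑_{h ≥ -m} f_h X^{-h}` with
`f_{-m} ≠ 0` then `deg F = m`. -/
def deg (F : LaurentSeries k) : ℤ := -F.order

/-- The norm `|F| = 2 ^ deg F`, with `|0| = 0`. -/
def lnorm (F : LaurentSeries k) : ℝ := if F = 0 then 0 else (2 : ℝ) ^ (deg F)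

/-- Fractional part: the part of the series comprising only negative powers of `X`. -/
def frac (F : LaurentSeries k) : LaurentSeries k where
  coeff n := if 1 ≤ n then F.coeff n else 0
  isPWO_support' := F.isPWO_support'.mono (fun n hn => by
    simp only [Function.mem_support] at hn ⊢
    intro h
    exact hn (by simp [h]))

/-- `‖F‖`: the norm of the fractional part of `F`. -/
def fnorm (F : LaurentSeries k) : ℝ := lnorm (frac F)

/-- `F` is a rational function. -/
def IsRat (F : LaurentSeries k) : Prop :=
  ∃ p q : Polynomial k, q ≠ 0 ∧ F * emb q = emb p

/-- The polynomial part of a Laurent series (the part with nonnegative powers of `X`). -/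
def polyPart (F : LaurentSeries k) : Polynomial k :=
  ∑ i ∈ Finset.range ((-F.order).toNat + 1), Polynomial.C (F.coeff (-(i : ℤ))) * Polynomial.X ^ i

/-- The complete quotients of the continued fraction algorithm applied to `F`. -/
def cfRem (F : LaurentSeries k) : ℕ → LaurentSeries k
  | 0 => F
  | n + 1 => (cfRem F n - emb (polyPart (cfRem F n)))⁻¹

/-- The partial quotients of the continued fraction expansion of `F`. -/
def pq (F : LaurentSeries k) (n : ℕ) : Polynomial k := polyPart (cfRem F n)

/-- Denominators `q_n` of the convergents of the continued fraction with
partial quotients `a`. -/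
def den (a : ℕ → Polynomial k) : ℕ → Polynomial k
  | 0 => 1
  | 1 => a 1
  | n + 2 => a (n + 2) * den a (n + 1) + den a n

/-- Numerators `p_n` of the convergents. -/
def num (a : ℕ → Polynomial k) : ℕ → Polynomial k
  | 0 => a 0
  | 1 => a 1 * a 0 + 1
  | n + 2 => a (n + 2) * num a (n + 1) + num a n

/-- The value of a finite continued fraction `[b_0, b_1, …, b_m]` over `k[X]`. -/
def finCF : List (Polynomial k) → LaurentSeries k
  | [] => 0
  | [b] => emb b
  | b :: l => emb b + (finCF l)⁻¹

/-- `F` is badly approximable. -/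
def Bad (F : LaurentSeries k) : Prop :=
  ∃ c : ℝ, 0 < c ∧ ∀ q : Polynomial k, q ≠ 0 → c ≤ lnorm (emb q) * fnorm (emb q * F)

theorem XLS_pow (i : ℕ) : XLS k ^ i = HahnSeries.single (-(i : ℤ)) (1 : k) := by
  have h : XLS k = HahnSeries.single (-1 : ℤ) (1 : k) := by
    simp [XLS, HahnSeries.inv_single]
  simp [h, HahnSeries.single_pow]

theorem emb_zero : emb (0 : k[X]) = 0 := map_zero (Polynomial.aeval (XLS k))

theorem emb_one : emb (1 : k[X]) = 1 := map_one (Polynomial.aeval (XLS k))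

theorem emb_add (p q : k[X]) : emb (p + q) = emb p + emb q :=
  map_add (Polynomial.aeval (XLS k)) p q

theorem emb_mul (p q : k[X]) : emb (p * q) = emb p * emb q :=
  map_mul (Polynomial.aeval (XLS k)) p q

theorem emb_monomial (i : ℕ) (c : k) :
    emb (Polynomial.monomial i c) = HahnSeries.single (-(i : ℤ)) c := by
  rw [emb, Polynomial.aeval_monomial, XLS_pow, LaurentSeries.algebraMap_apply,
    HahnSeries.C_apply, HahnSeries.single_mul_single]
  simp

theorem emb_coeff_neg (p : k[X]) (i : ℕ) : (emb p).coeff (-(i : ℤ)) = p.coeff i := by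
  induction p using Polynomial.induction_on' with
  | add p q hp hq => simp [emb_add, hp, hq]
  | monomial n c =>
    simp [emb_monomial, HahnSeries.coeff_single, Polynomial.coeff_monomial, eq_comm]

theorem emb_coeff_of_pos (p : k[X]) {m : ℤ} (hm : 0 < m) : (emb p).coeff m = 0 := by
  induction p using Polynomial.induction_on' with
  | add p q hp hq => simp [emb_add, hp, hq]
  | monomial n c =>
    rw [emb_monomial, HahnSeries.coeff_single_of_ne]
    omega

theorem emb_ne_zero {p : k[X]} (hp : p ≠ 0) : emb p ≠ 0 := by
  intro h
  apply hp
  ext i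
  rw [← emb_coeff_neg, h]
  simp

theorem order_emb {p : k[X]} (hp : p ≠ 0) : (emb p).order = -(p.natDegree : ℤ) := by
  apply le_antisymm
  · apply HahnSeries.order_le_of_coeff_ne_zero
    rw [emb_coeff_neg]
    simpa using hp
  · by_contra! h
    have hc : (emb p).coeff (emb p).order ≠ 0 :=
      HahnSeries.coeff_order_eq_zero.not.mpr (emb_ne_zero hp)
    obtain ⟨i, hi⟩ := Int.eq_ofNat_of_zero_le (a := -(emb p).order) (by omega)
    have hi' : (emb p).order = -(i : ℤ) := by omega
    rw [hi', emb_coeff_neg] at hc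
    exact hc (Polynomial.coeff_eq_zero_of_natDegree_lt (by omega))

theorem polyPart_coeff (F : LaurentSeries k) (i : ℕ) :
    (polyPart F).coeff i = F.coeff (-(i : ℤ)) := by
  simp only [polyPart, Polynomial.finsetSum_coeff, Polynomial.coeff_C_mul_X_pow]
  rw [Finset.sum_ite_eq]
  split_ifs with h
  · rfl
  · symm
    apply HahnSeries.coeff_eq_zero_of_lt_order
    simp only [Finset.mem_range] at h
    omega

theorem sub_emb_polyPart (F : LaurentSeries k) : F - emb (polyPart F) = frac F := by
  ext m
  rw [HahnSeries.coeff_sub]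
  change _ = if 1 ≤ m then F.coeff m else 0
  split_ifs with h
  · rw [emb_coeff_of_pos _ (by omega), sub_zero]
  · obtain ⟨i, hi⟩ := Int.eq_ofNat_of_zero_le (a := -m) (by omega)
    have hi' : m = -(i : ℤ) := by omega
    rw [hi', emb_coeff_neg, polyPart_coeff, sub_self]

theorem one_le_order_frac {F : LaurentSeries k} (h : frac F ≠ 0) : 1 ≤ (frac F).order := by
  by_contra hlt
  apply HahnSeries.coeff_order_eq_zero.not.mpr h
  change (if 1 ≤ (frac F).order then _ else 0) = _
  rw [if_neg hlt]

theorem frac_eq_of_sub_emb {F G : LaurentSeries k} (p : k[X]) (h : F - emb p = G)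
    (hG : 1 ≤ G.order) : frac F = G := by
  subst h
  ext m
  change (if 1 ≤ m then F.coeff m else 0) = _
  split_ifs with hm
  · rw [HahnSeries.coeff_sub, emb_coeff_of_pos _ (by omega), sub_zero]
  · rw [HahnSeries.coeff_eq_zero_of_lt_order (by omega)]

theorem natDegree_polyPart {F : LaurentSeries k} (hF : F ≠ 0) (h : F.order ≤ 0) :
    ((polyPart F).natDegree : ℤ) = -F.order := by
  obtain ⟨d, hd⟩ := Int.eq_ofNat_of_zero_le (a := -F.order) (by omega)
  rw [hd]
  norm_cast
  apply Polynomial.natDegree_eq_of_le_of_coeff_ne_zero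
  · rw [Polynomial.natDegree_le_iff_coeff_eq_zero]
    intro i hi
    rw [polyPart_coeff]
    exact HahnSeries.coeff_eq_zero_of_lt_order (by omega)
  · rw [polyPart_coeff, show -(d : ℤ) = F.order by omega]
    exact HahnSeries.coeff_order_eq_zero.not.mpr hF

theorem order_inv_eq_neg {F : LaurentSeries k} (hF : F ≠ 0) : (F⁻¹).order = -F.order := by
  have h := HahnSeries.order_mul hF (inv_ne_zero hF)
  rw [mul_inv_cancel₀ hF, HahnSeries.order_one] at h
  omega

theorem lnorm_of_ne_zero {F : LaurentSeries k} (hF : F ≠ 0) :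
    lnorm F = (2 : ℝ) ^ (-F.order) := by
  rw [lnorm, if_neg hF, deg]

theorem isRat_emb (p : k[X]) : IsRat (emb p) := ⟨p, 1, one_ne_zero, by simp [emb_one]⟩

theorem not_isRat_cfRem {F : LaurentSeries k} (hF : ¬ IsRat F) (n : ℕ) :
    ¬ IsRat (cfRem F n) := by
  induction n with
  | zero => exact hF
  | succ n ih =>
    rintro ⟨p, q, hq, h⟩
    apply ih
    have hne : cfRem F n - emb (polyPart (cfRem F n)) ≠ 0 := by
      intro h0
      rw [sub_eq_zero] at h0
      exact ih (h0 ▸ isRat_emb _)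
    have hp : p ≠ 0 := by
      rintro rfl
      rw [emb_zero] at h
      exact mul_ne_zero (inv_ne_zero hne) (emb_ne_zero hq) h
    refine ⟨polyPart (cfRem F n) * p + q, p, hp, ?_⟩
    have h2 : emb q = (cfRem F n - emb (polyPart (cfRem F n))) * emb p := by
      rw [← h]
      exact (mul_inv_cancel_left₀ hne _).symm
    rw [emb_add, emb_mul, h2]
    ring

theorem cfRem_ne_zero {F : LaurentSeries k} (hF : ¬ IsRat F) (n : ℕ) : cfRem F n ≠ 0 := by
  intro h
  apply not_isRat_cfRem hF n
  rw [h, ← emb_zero]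
  exact isRat_emb 0

theorem cfRem_eq_add_inv (F : LaurentSeries k) (n : ℕ) :
    cfRem F n = emb (pq F n) + (cfRem F (n + 1))⁻¹ := by
  simp [cfRem, pq]

theorem order_cfRem_succ {F : LaurentSeries k} (hF : ¬ IsRat F) (n : ℕ) :
    (cfRem F (n + 1)).order ≤ -1 := by
  have h := cfRem_ne_zero hF (n + 1)
  rw [cfRem, sub_emb_polyPart] at h ⊢
  have h0 : frac (cfRem F n) ≠ 0 := fun h0 => h (by rw [h0, inv_zero])
  have h1 := one_le_order_frac h0
  rw [order_inv_eq_neg h0]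
  omega

theorem natDegree_pq_succ {F : LaurentSeries k} (hF : ¬ IsRat F) (n : ℕ) :
    ((pq F (n + 1)).natDegree : ℤ) = -(cfRem F (n + 1)).order :=
  natDegree_polyPart (cfRem_ne_zero hF _) (by linarith [order_cfRem_succ hF n])

theorem natDegree_pq_pos {F : LaurentSeries k} (hF : ¬ IsRat F) (n : ℕ) :
    0 < (pq F (n + 1)).natDegree := by
  have := natDegree_pq_succ hF n
  have := order_cfRem_succ hF n
  omega

theorem natDegree_den_succ {a : ℕ → k[X]} (ha : ∀ i, 0 < (a (i + 1)).natDegree) (n : ℕ) :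
    den a n ≠ 0 ∧ (den a (n + 1)).natDegree = (a (n + 1)).natDegree + (den a n).natDegree := by
  induction n with
  | zero => simp [den]
  | succ n ih =>
    obtain ⟨h0, hd⟩ := ih
    have h1 : den a (n + 1) ≠ 0 := by
      intro h
      have := ha n
      rw [h, Polynomial.natDegree_zero] at hd
      omega
    have h2 : a (n + 2) ≠ 0 := Polynomial.ne_zero_of_natDegree_gt (ha (n + 1))
    refine ⟨h1, ?_⟩
    have h3 := Polynomial.natDegree_mul h2 h1
    have := ha n
    rw [den, Polynomial.natDegree_add_eq_left_of_natDegree_lt (by omega), h3]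

/-- The error `q_n F - p_n` of the `n`-th convergent. -/
def convErr (F : LaurentSeries k) (n : ℕ) : LaurentSeries k :=
  emb (den (pq F) n) * F - emb (num (pq F) n)

theorem convErr_zero (F : LaurentSeries k) : convErr F 0 = (cfRem F 1)⁻¹ := by
  simp [convErr, den, num, emb_one, cfRem, pq]

theorem convErr_succ {F : LaurentSeries k} (hF : ¬ IsRat F) (n : ℕ) :
    convErr F (n + 1) = -convErr F n * (cfRem F (n + 2))⁻¹ := by
  induction n with
  | zero =>
    have h0 := convErr_zero F
    have h1 := cfRem_eq_add_inv F 1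
    have h2 := cfRem_eq_add_inv F 0
    have h3 := cfRem_ne_zero hF 1
    have h4 : (cfRem F 2)⁻¹ = cfRem F 1 - emb (pq F 1) := by rw [h1]; ring
    have h5 : F = emb (pq F 0) + (cfRem F 1)⁻¹ := h2
    rw [h0, h4, convErr, den, num, emb_add, emb_mul, emb_one]
    have h6 : (cfRem F 1)⁻¹ = F - emb (pq F 0) := by exact eq_sub_of_add_eq' h5.symm
    have h7 : (cfRem F 1)⁻¹ * cfRem F 1 = 1 := inv_mul_cancel₀ h3
    linear_combination (-emb (pq F 1)) * h6 + h7
  | succ n ih =>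
    have h4 : (cfRem F (n + 3))⁻¹ = cfRem F (n + 2) - emb (pq F (n + 2)) := by
      rw [cfRem_eq_add_inv F (n + 2)]; ring
    have h7 : (cfRem F (n + 2))⁻¹ * cfRem F (n + 2) = 1 :=
      inv_mul_cancel₀ (cfRem_ne_zero hF _)
    have hrec : convErr F (n + 2) = emb (pq F (n + 2)) * convErr F (n + 1) + convErr F n := by
      simp only [convErr, den, num, emb_add, emb_mul]
      ring
    rw [hrec, h4]
    linear_combination (cfRem F (n + 2)) * ih - convErr F n * h7

theorem order_convErr {F : LaurentSeries k} (hF : ¬ IsRat F) (n : ℕ) :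
    convErr F n ≠ 0 ∧ (convErr F n).order = ((den (pq F) (n + 1)).natDegree : ℤ) := by
  induction n with
  | zero =>
    rw [convErr_zero]
    refine ⟨inv_ne_zero (cfRem_ne_zero hF 1), ?_⟩
    rw [order_inv_eq_neg (cfRem_ne_zero hF 1), den]
    exact (natDegree_pq_succ hF 0).symm
  | succ n ih =>
    have hT := inv_ne_zero (cfRem_ne_zero hF (n + 2))
    rw [convErr_succ hF]
    refine ⟨mul_ne_zero (neg_ne_zero.mpr ih.1) hT, ?_⟩
    rw [HahnSeries.order_mul (neg_ne_zero.mpr ih.1) hT, HahnSeries.order_neg, ih.2,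
      order_inv_eq_neg (cfRem_ne_zero hF _), (natDegree_den_succ (natDegree_pq_pos hF) (n + 1)).2]
    push_cast
    rw [natDegree_pq_succ hF]
    ring

/-- The matrix attached to one step of the continued fraction recurrence. -/
def cfMatrix (b : k[X]) : Matrix (Fin 2) (Fin 2) k[X] := !![b, 1; 1, 0]

theorem prod_cfMatrix {a : ℕ → k[X]} (h0 : a 0 = 0) (n : ℕ) :
    ((List.range (n + 1)).map fun i => cfMatrix (a (i + 1))).prod =
      !![den a (n + 1), den a n; num a (n + 1), num a n] := by
  induction n with
  | zero => simp [cfMatrix, den, num, h0]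
  | succ n ih =>
    rw [List.range_succ, List.map_append, List.prod_append, ih]
    simp [cfMatrix, den, num, mul_comm (a (n + 2))]

theorem num_eq_den_of_palindrome {a : ℕ → k[X]} (h0 : a 0 = 0) (n : ℕ)
    (hpal : ∀ i, i ≤ n → a (i + 1) = a (n - i + 1)) : num a (n + 1) = den a n := by
  have hrev : ((List.range (n + 1)).map fun i => cfMatrix (a (i + 1))).reverse =
      (List.range (n + 1)).map fun i => cfMatrix (a (i + 1)) := by
    apply List.ext_getElem (by simp)
    intro i hi _
    simp only [List.length_reverse, List.length_map, List.length_range] at hi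
    simp only [List.getElem_reverse, List.getElem_map, List.getElem_range, List.length_map,
      List.length_range]
    rw [hpal i (by omega)]
    congr 3
  have hT : ((List.range (n + 1)).map fun i => cfMatrix (a (i + 1))).prod.transpose =
      ((List.range (n + 1)).map fun i => cfMatrix (a (i + 1))).prod := by
    rw [Matrix.transpose_list_prod, ← List.map_reverse, hrev, List.map_map]
    congr 2
    funext i
    ext r s
    fin_cases r <;> fin_cases s <;> rfl
  rw [prod_cfMatrix h0] at hT
  simpa using congrFun (congrFun hT 0) 1

theorem palindrome_prefix_littlewood {k : Type*} [Field k] (Θ : LaurentSeries k)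
    (hΘ : ¬ IsRat Θ) (hnorm : lnorm Θ ≤ 1 / 2) (h0 : pq Θ 0 = 0)
    (n : ℕ) (hn : 1 ≤ n)
    (hpal : ∀ i : ℕ, 1 ≤ i → i ≤ n → pq Θ i = pq Θ (n + 1 - i)) :
    fnorm (emb (den (pq Θ) (n - 1)) * Θ⁻¹) ≤
        (2 : ℝ) ^ (-((den (pq Θ) (n - 1)).natDegree : ℤ)) ∧
      lnorm (emb (den (pq Θ) (n - 1))) ^ 2 * fnorm (emb (den (pq Θ) (n - 1)) * Θ) *
          fnorm (emb (den (pq Θ) (n - 1)) * Θ⁻¹) ≤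
        (2 : ℝ) ^ (((den (pq Θ) (n - 1)).natDegree : ℤ) - ((den (pq Θ) n).natDegree : ℤ)) ∧
      (2 : ℝ) ^ (((den (pq Θ) (n - 1)).natDegree : ℤ) - ((den (pq Θ) n).natDegree : ℤ)) < 1 := by
  obtain ⟨m, rfl⟩ : ∃ m, n = m + 1 := ⟨n - 1, by omega⟩
  rw [Nat.add_sub_cancel]
  have hpos := natDegree_pq_pos hΘ
  have hΘ0 : Θ ≠ 0 := cfRem_ne_zero hΘ 0
  obtain ⟨hq, hdeg⟩ := natDegree_den_succ hpos m
  have hdeg' := (natDegree_den_succ hpos (m + 1)).2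
  have hlast : pq Θ 1 = pq Θ (m + 1) := by
    simpa using hpal 1 le_rfl (by omega)
  have hnum : num (pq Θ) (m + 1) = den (pq Θ) m :=
    num_eq_den_of_palindrome h0 m fun i hi => by
      have h := hpal (i + 1) (by omega) (by omega)
      rwa [show m + 1 + 1 - (i + 1) = m - i + 1 by omega] at h
  have hordΘ : Θ.order = ((pq Θ 1).natDegree : ℤ) := by
    have h := cfRem_eq_add_inv Θ 0
    rw [h0, emb_zero, zero_add] at h
    change Θ = _ at h
    rw [congrArg HahnSeries.order h, order_inv_eq_neg (cfRem_ne_zero hΘ 1), ← natDegree_pq_succ hΘ 0]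
  obtain ⟨hE, hEord⟩ := order_convErr hΘ m
  obtain ⟨hE', hEord'⟩ := order_convErr hΘ (m + 1)
  have hm := hpos m
  have hm' : 0 < (pq Θ (m + 2)).natDegree := hpos (m + 1)
  have hfrac : fnorm (emb (den (pq Θ) m) * Θ) =
      (2 : ℝ) ^ (-((den (pq Θ) (m + 1)).natDegree : ℤ)) := by
    rw [fnorm, frac_eq_of_sub_emb (num (pq Θ) m) (G := convErr Θ m) rfl (by omega),
      lnorm_of_ne_zero hE, hEord]
  have hG : -convErr Θ (m + 1) * Θ⁻¹ ≠ 0 := mul_ne_zero (neg_ne_zero.mpr hE') (inv_ne_zero hΘ0)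
  have hGord : (-convErr Θ (m + 1) * Θ⁻¹).order =
      ((den (pq Θ) m).natDegree : ℤ) + (pq Θ (m + 2)).natDegree := by
    rw [HahnSeries.order_mul (neg_ne_zero.mpr hE') (inv_ne_zero hΘ0), HahnSeries.order_neg,
      order_inv_eq_neg hΘ0, hEord', hordΘ, hlast, hdeg', hdeg]
    push_cast
    ring
  have hfracInv : fnorm (emb (den (pq Θ) m) * Θ⁻¹) ≤
      (2 : ℝ) ^ (-((den (pq Θ) m).natDegree : ℤ)) := by
    have hsub : emb (den (pq Θ) m) * Θ⁻¹ - emb (den (pq Θ) (m + 1)) =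
        -convErr Θ (m + 1) * Θ⁻¹ := by
      rw [convErr, hnum]
      field_simp
      ring
    rw [fnorm, frac_eq_of_sub_emb _ hsub (by omega), lnorm_of_ne_zero hG, hGord]
    exact zpow_le_zpow_right₀ (by norm_num) (by omega)
  refine ⟨hfracInv, ?_, ?_⟩
  · rw [hfrac, lnorm_of_ne_zero (emb_ne_zero hq), order_emb hq, neg_neg]
    refine (mul_le_mul_of_nonneg_left hfracInv (by positivity)).trans_eq ?_
    rw [← zpow_natCast, ← zpow_mul, ← zpow_add₀ (by norm_num), ← zpow_add₀ (by norm_num)]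
    congr 1
    push_cast
    ring
  · exact zpow_lt_one_of_neg₀ (by norm_num) (by omega)

end Littlewood
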